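/- arXiv:2406.18383 — 2 statements merged into one kernel-verified Lean document; each statement's English description precedes it below -/
import Mathlib

section
/- Let ℓ ≥ 1 and let x ∈ B^ℕ be such that for every word u ∈ B^{ℓ+1} the frequency α_u := lim_{n→∞} occ(x[0:n), u)/n exists. Then lim_{n→∞} β_ℓ(x[0:n)) exists and equals Σ_{v ∈ B^ℓ} min(α_{0v}, α_{1v}), and lim_{n→∞} γ_ℓ(x[0:n)) exists and equals Σ_{v ∈ B^ℓ} min(α_{v0}, α_{v1}), where 0v, 1v, v0, v1 denote the words obtained by prepending respectively appending the symbol to v. -/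
open Filter Topology

/-- The factor of length `len` of the sequence `x` starting at position `i`. -/
def factor (x : ℕ → Bool) (i len : ℕ) : List Bool :=
  List.ofFn (fun j : Fin len => x (i + j))

/-- Number of (possibly overlapping) occurrences of the word `u`
in the prefix `x[0:n)` of the sequence `x`. -/
def occ (x : ℕ → Bool) (n : ℕ) (u : List Bool) : ℕ :=
  ((Finset.range (n + 1 - u.length)).filter (fun i => factor x i u.length = u)).card

/-- Non-aligned `ℓ`-block entropy of the prefix `x[0:n)`
(logs are base 2, with the convention `0 · log 0 = 0`). -/
noncomputable def hBlock (ℓ : ℕ) (x : ℕ → Bool) (n : ℕ) : ℝ :=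
  -(1 / (ℓ : ℝ)) * ∑ u : Fin ℓ → Bool,
    ((occ x n (List.ofFn u) : ℝ) / ((n : ℝ) - ℓ + 1)) *
      Real.logb 2 ((occ x n (List.ofFn u) : ℝ) / ((n : ℝ) - ℓ + 1))

/-- `h̲(x) = lim_{ℓ→∞} liminf_{n→∞} h_ℓ(x[0:n))` (the limit in `ℓ` exists). -/
noncomputable def hLow (x : ℕ → Bool) : ℝ :=
  atTop.liminf fun ℓ => atTop.liminf fun n => hBlock ℓ x n

/-- `h̄(x) = lim_{ℓ→∞} limsup_{n→∞} h_ℓ(x[0:n))` (the limit in `ℓ` exists). -/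
noncomputable def hUp (x : ℕ → Bool) : ℝ :=
  atTop.limsup fun ℓ => atTop.limsup fun n => hBlock ℓ x n

/-- `γ_ℓ(x[0:n))`: normalized minimal number of prediction errors when predicting
`x[i]` from the preceding `ℓ` symbols `x[i-ℓ:i)`, for `i ∈ {ℓ,…,n-1}`. -/
noncomputable def gammaWord (ℓ : ℕ) (x : ℕ → Bool) (n : ℕ) : ℝ :=
  (1 / ((n : ℝ) - ℓ)) *
    ((Finset.univ : Finset ((Fin ℓ → Bool) → Bool)).inf' Finset.univ_nonempty
      (fun f => ((((Finset.Ico ℓ n).filter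
        (fun i => x i ≠ f (fun j => x (i - ℓ + j)))).card : ℝ))))

/-- `β_ℓ(x[0:n))`: normalized minimal number of prediction errors when predicting
`x[i]` from the following `ℓ` symbols `x[i+1:i+ℓ+1)`, for `i ∈ {0,…,n-ℓ-1}`. -/
noncomputable def betaWord (ℓ : ℕ) (x : ℕ → Bool) (n : ℕ) : ℝ :=
  (1 / ((n : ℝ) - ℓ)) *
    ((Finset.univ : Finset ((Fin ℓ → Bool) → Bool)).inf' Finset.univ_nonempty
      (fun f => ((((Finset.range (n - ℓ)).filter
        (fun i => x i ≠ f (fun j => x (i + 1 + j)))).card : ℝ))))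

/-- `γ̲(x) = lim_{ℓ→∞} liminf_{n→∞} γ_ℓ(x[0:n))` (the limit in `ℓ` exists, by monotonicity). -/
noncomputable def gammaLow (x : ℕ → Bool) : ℝ :=
  atTop.liminf fun ℓ => atTop.liminf fun n => gammaWord ℓ x n

/-- `γ̄(x) = lim_{ℓ→∞} limsup_{n→∞} γ_ℓ(x[0:n))` (the limit in `ℓ` exists, by monotonicity). -/
noncomputable def gammaUp (x : ℕ → Bool) : ℝ :=
  atTop.limsup fun ℓ => atTop.limsup fun n => gammaWord ℓ x n

/-- `β̲(x) = lim_{ℓ→∞} liminf_{n→∞} β_ℓ(x[0:n))` (the limit in `ℓ` exists, by monotonicity). -/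
noncomputable def betaLow (x : ℕ → Bool) : ℝ :=
  atTop.liminf fun ℓ => atTop.liminf fun n => betaWord ℓ x n

/-- `β̄(x) = lim_{ℓ→∞} limsup_{n→∞} β_ℓ(x[0:n))` (the limit in `ℓ` exists, by monotonicity). -/
noncomputable def betaUp (x : ℕ → Bool) : ℝ :=
  atTop.limsup fun ℓ => atTop.limsup fun n => betaWord ℓ x n

/-- Binary Shannon entropy function `H(α) = -α log α - (1-α) log (1-α)` (base-2 logs). -/
noncomputable def binEntropy (a : ℝ) : ℝ :=
  -(a * Real.logb 2 a) - (1 - a) * Real.logb 2 (1 - a)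

/-- Conditional block entropy `Hc^{n,ℓ}(x)`:
`-Σ_{ā ∈ B^ℓ, a ∈ B, p(ā·a) > 0} p(ā·a) · log (p(ā·a)/p(ā))`, where
`p(ā) = occ(x[0:n-1), ā)/(n-ℓ)` and `p(ā·a) = occ(x[0:n), ā·a)/(n-ℓ)`. -/
noncomputable def condEntropy (ℓ : ℕ) (x : ℕ → Bool) (n : ℕ) : ℝ :=
  -∑ u : Fin ℓ → Bool, ∑ a : Bool,
    (if 0 < ((occ x n (List.ofFn u ++ [a]) : ℝ) / ((n : ℝ) - ℓ)) then
      ((occ x n (List.ofFn u ++ [a]) : ℝ) / ((n : ℝ) - ℓ)) *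
        Real.logb 2 (((occ x n (List.ofFn u ++ [a]) : ℝ) / ((n : ℝ) - ℓ)) /
          ((occ x (n - 1) (List.ofFn u) : ℝ) / ((n : ℝ) - ℓ)))
    else 0)

/-- The real number in `[0,1]` denoted by the binary sequence `x`. -/
noncomputable def val (x : ℕ → Bool) : ℝ :=
  ∑' n : ℕ, (if x n then (1 : ℝ) else 0) / 2 ^ (n + 1)

/-!
A predictor `f : (Fin ℓ → Bool) → Bool` may be chosen independently on each context, so the minimal
number of errors is the sum over contexts `v` of the smaller of the two counts of symbols seen next
to `v`. These counts are the occurrences of `0v`, `1v` (for `β`) or `v0`, `v1` (for `γ`), and the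
normalizations by `n - ℓ` and by `n` are asymptotically equivalent.
-/

open scoped Finset

section MinimalErrors

variable {ι W A : Type*} [Fintype W] [DecidableEq W]

theorem inf'_sum_apply_eq_sum_inf' [Fintype A] [Nonempty A] {M : Type*} [AddCommMonoid M]
    [LinearOrder M] [IsOrderedAddMonoid M] (c : W → A → M) :
    (Finset.univ : Finset (W → A)).inf' Finset.univ_nonempty (fun f => ∑ w, c w (f w)) =
      ∑ w, Finset.univ.inf' Finset.univ_nonempty (c w) := by
  apply le_antisymm
  · choose f _ hf using fun w =>
      Finset.exists_mem_eq_inf' (Finset.univ_nonempty (α := A)) (c w)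
    simp only [hf]
    exact Finset.inf'_le _ (Finset.mem_univ f)
  · exact Finset.le_inf' _ _ fun f _ =>
      Finset.sum_le_sum fun w _ => Finset.inf'_le _ (Finset.mem_univ (f w))

theorem card_filter_ne_comp_eq_sum [DecidableEq A] (s : Finset ι) (b : ι → A) (g : ι → W)
    (f : W → A) :
    #{i ∈ s | b i ≠ f (g i)} = ∑ w, #{i ∈ s | b i ≠ f w ∧ g i = w} := by
  rw [Finset.card_eq_sum_card_fiberwise (f := g) (t := Finset.univ) (by simp)]
  refine Finset.sum_congr rfl fun w _ => congrArg Finset.card ?_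
  rw [Finset.filter_filter]
  exact Finset.filter_congr fun i _ => and_congr_left fun hi => by rw [hi]

theorem inf'_card_filter_ne_comp_eq_sum_min {R : Type*} [NonAssocSemiring R] [LinearOrder R]
    [IsOrderedAddMonoid R] (s : Finset ι) (b : ι → Bool) (g : ι → W) :
    (Finset.univ : Finset (W → Bool)).inf' Finset.univ_nonempty
        (fun f => (#{i ∈ s | b i ≠ f (g i)} : R)) =
      ∑ w, min (#{i ∈ s | b i = false ∧ g i = w} : R) #{i ∈ s | b i = true ∧ g i = w} := by
  simp only [card_filter_ne_comp_eq_sum, Nat.cast_sum]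
  rw [inf'_sum_apply_eq_sum_inf' (fun w a => (#{i ∈ s | b i ≠ a ∧ g i = w} : R))]
  exact Finset.sum_congr rfl fun w _ => by simp [Fintype.univ_bool]

end MinimalErrors

section Occurrences

variable (x : ℕ → Bool) (n : ℕ)

theorem occ_ofFn {k : ℕ} (u : Fin k → Bool) :
    occ x n (List.ofFn u) =
      #{i ∈ Finset.range (n + 1 - k) | (fun j : Fin k => x (i + j)) = u} := by
  simp only [occ, factor, List.length_ofFn, Fin.val_cast, List.ofFn_inj]

variable {ℓ : ℕ} (v : Fin ℓ → Bool) (a : Bool)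

theorem occ_ofFn_cons :
    occ x n (List.ofFn (Fin.cons a v : Fin (ℓ + 1) → Bool)) =
      #{i ∈ Finset.range (n - ℓ) | x i = a ∧ (fun j : Fin ℓ => x (i + 1 + j)) = v} := by
  rw [occ_ofFn, Nat.add_sub_add_right]
  simp only [funext_iff, Fin.forall_fin_succ, Fin.cons_zero, Fin.cons_succ, Fin.val_zero,
    Fin.val_succ, add_zero, add_assoc, add_comm 1]

theorem occ_ofFn_snoc :
    occ x n (List.ofFn (Fin.snoc v a : Fin (ℓ + 1) → Bool)) =
      #{i ∈ Finset.Ico ℓ n | x i = a ∧ (fun j : Fin ℓ => x (i - ℓ + j)) = v} := by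
  have window_eq_snoc_iff (i : ℕ) :
      (fun j : Fin (ℓ + 1) => x (i + j)) = Fin.snoc v a ↔
        x (i + ℓ) = a ∧ (fun j : Fin ℓ => x (i + j)) = v := by
    simp only [funext_iff, Fin.forall_fin_succ', Fin.snoc_castSucc, Fin.snoc_last,
      Fin.val_castSucc, Fin.val_last, and_comm]
  rw [occ_ofFn, Nat.add_sub_add_right]
  simp only [window_eq_snoc_iff, Finset.card_filter]
  rw [Finset.sum_Ico_eq_sum_range]
  simp only [add_comm ℓ, Nat.add_sub_cancel]

end Occurrences

theorem betaWord_eq_sum_min_div (ℓ : ℕ) (x : ℕ → Bool) (n : ℕ) :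
    betaWord ℓ x n =
      (∑ v : Fin ℓ → Bool, min (occ x n (List.ofFn (Fin.cons false v : Fin (ℓ + 1) → Bool)) : ℝ)
        (occ x n (List.ofFn (Fin.cons true v : Fin (ℓ + 1) → Bool)))) / ((n : ℝ) - ℓ) := by
  rw [betaWord, inf'_card_filter_ne_comp_eq_sum_min (Finset.range (n - ℓ)) x
    (fun i (j : Fin ℓ) => x (i + 1 + j)), one_div_mul_eq_div]
  simp only [occ_ofFn_cons]

theorem gammaWord_eq_sum_min_div (ℓ : ℕ) (x : ℕ → Bool) (n : ℕ) :
    gammaWord ℓ x n =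
      (∑ v : Fin ℓ → Bool, min (occ x n (List.ofFn (Fin.snoc v false : Fin (ℓ + 1) → Bool)) : ℝ)
        (occ x n (List.ofFn (Fin.snoc v true : Fin (ℓ + 1) → Bool)))) / ((n : ℝ) - ℓ) := by
  rw [gammaWord, inf'_card_filter_ne_comp_eq_sum_min (Finset.Ico ℓ n) x
    (fun i (j : Fin ℓ) => x (i - ℓ + j)), one_div_mul_eq_div]
  simp only [occ_ofFn_snoc]

theorem tendsto_div_natCast_sub_of_tendsto_div_natCast {c : ℕ → ℝ} {p : ℝ}
    (hc : Tendsto (fun n => c n / n) atTop (𝓝 p)) (r : ℝ) :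
    Tendsto (fun n => c n / (n - r)) atTop (𝓝 p) := by
  have h_ratio : Tendsto (fun n : ℕ => (n : ℝ) / (n - r)) atTop (𝓝 1) := by
    simpa only [sub_eq_add_neg] using tendsto_natCast_div_add_atTop (-r)
  refine (mul_one p ▸ hc.mul h_ratio).congr' ?_
  filter_upwards [eventually_ne_atTop 0] with n hn
  exact div_mul_div_cancel₀ (Nat.cast_ne_zero.mpr hn)

theorem tendsto_sum_min_div_natCast {W : Type*} [Fintype W] {c d : W → ℕ → ℝ} {p q : W → ℝ}
    (hc : ∀ w, Tendsto (fun n => c w n / n) atTop (𝓝 (p w)))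
    (hd : ∀ w, Tendsto (fun n => d w n / n) atTop (𝓝 (q w))) :
    Tendsto (fun n : ℕ => (∑ w, min (c w n) (d w n)) / n) atTop (𝓝 (∑ w, min (p w) (q w))) := by
  simp only [Finset.sum_div, ← min_div_div_right (Nat.cast_nonneg _)]
  exact tendsto_finsetSum _ fun w _ => (hc w).min (hd w)

theorem tendsto_beta_gamma_of_freq (ℓ : ℕ) (hℓ : 1 ≤ ℓ) (x : ℕ → Bool)
    (α : (Fin (ℓ + 1) → Bool) → ℝ)
    (hα : ∀ u : Fin (ℓ + 1) → Bool,
      Filter.Tendsto (fun n => (occ x n (List.ofFn u) : ℝ) / n) atTop (nhds (α u))) :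
    Filter.Tendsto (fun n => betaWord ℓ x n) atTop
      (nhds (∑ v : Fin ℓ → Bool, min (α (Fin.cons false v)) (α (Fin.cons true v)))) ∧
    Filter.Tendsto (fun n => gammaWord ℓ x n) atTop
      (nhds (∑ v : Fin ℓ → Bool, min (α (Fin.snoc v false)) (α (Fin.snoc v true)))) := by
  simp only [betaWord_eq_sum_min_div, gammaWord_eq_sum_min_div]
  constructor
  · exact tendsto_div_natCast_sub_of_tendsto_div_natCast
      (tendsto_sum_min_div_natCast (fun v => hα (Fin.cons false v))
        fun v => hα (Fin.cons true v)) ℓ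
  · exact tendsto_div_natCast_sub_of_tendsto_div_natCast
      (tendsto_sum_min_div_natCast (fun v => hα (Fin.snoc v false))
        fun v => hα (Fin.snoc v true)) ℓ
end

section
/- For every x ∈ B^ℕ and all integers n > ℓ ≥ 1, 2·γ_ℓ(x[0:n)) ≤ Hc^{n,ℓ}(x) ≤ H(γ_ℓ(x[0:n))). -/
open Filter Topology

/-!
For a uniformly random position `i < n - ℓ`, the context `u = x[i:i+ℓ)` and the letter `a = x[i+ℓ]`
have joint distribution `p(u·a)`. Then `Hc` is the conditional entropy of the letter given its
context, and `γ` is the error probability of the best predictor, which misses the less frequent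
successor of each context. If the context `u` has probability `p(u)` and conditional error
probability `e(u) ≤ 1/2`, this reads `Hc = ∑ p(u) H(e(u))` and `γ = ∑ p(u) e(u)`. The lower bound
averages the chord inequality `2e ≤ H(e)` on `[0, 1/2]` over `u`; the upper bound is Jensen's
inequality for the concave function `H`.
-/

section BinaryEntropy

lemma binEntropy_eq_div_log_two (p : ℝ) : binEntropy p = Real.binEntropy p / Real.log 2 := by
  rw [Real.binEntropy_eq_negMulLog_add_negMulLog_one_sub]
  unfold binEntropy Real.negMulLog Real.logb
  ring

lemma binEntropy_one_sub (p : ℝ) : binEntropy (1 - p) = binEntropy p := by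
  simp only [binEntropy_eq_div_log_two, Real.binEntropy_one_sub]

lemma concaveOn_binEntropy : ConcaveOn ℝ (Set.Icc 0 1) binEntropy := by
  have h := Real.strictConcave_binEntropy.concaveOn.smul
    (inv_nonneg.2 (Real.log_nonneg one_le_two))
  exact h.congr fun p _ => by simp only [binEntropy_eq_div_log_two, smul_eq_mul, inv_mul_eq_div]

lemma two_mul_le_binEntropy {p : ℝ} (hp₀ : 0 ≤ p) (hp : p ≤ 1 / 2) : 2 * p ≤ binEntropy p := by
  have h_zero : binEntropy 0 = 0 := by simp [binEntropy_eq_div_log_two]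
  have h_half : binEntropy 2⁻¹ = 1 := by
    rw [binEntropy_eq_div_log_two, Real.binEntropy_two_inv, div_self (Real.log_pos one_lt_two).ne']
  have h_chord := concaveOn_binEntropy.2 (x := 0) (y := 2⁻¹) (by norm_num) (by norm_num)
    (show 0 ≤ 1 - 2 * p by linarith) (show 0 ≤ 2 * p by linarith) (by ring)
  simp only [smul_eq_mul, h_zero, h_half] at h_chord
  calc 2 * p = (1 - 2 * p) * 0 + 2 * p * 1 := by ring
    _ ≤ binEntropy ((1 - 2 * p) * 0 + 2 * p * 2⁻¹) := h_chord
    _ = binEntropy p := by ring_nf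

/-- Both sides vanish when `a + b = 0`, by the conventions `x / 0 = 0` and `log 0 = 0`. -/
lemma neg_mul_logb_div_add_eq_mul_binEntropy (a b : ℝ) :
    -(a * Real.logb 2 (a / (a + b)) + b * Real.logb 2 (b / (a + b))) =
      (a + b) * binEntropy (min a b / (a + b)) := by
  rcases eq_or_ne (a + b) 0 with hab | hab
  · simp [hab]
  have h_compl : 1 - a / (a + b) = b / (a + b) := by field_simp; ring
  have h_symm : binEntropy (min a b / (a + b)) = binEntropy (a / (a + b)) := by
    rcases min_choice a b with h | h
    · rw [h]
    · rw [h, ← h_compl, binEntropy_one_sub]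
  rw [h_symm, binEntropy, h_compl]
  field_simp
  ring

lemma min_div_add_mem_Icc {a b : ℝ} (ha : 0 ≤ a) (hb : 0 ≤ b) :
    min a b / (a + b) ∈ Set.Icc 0 (1 / 2) := by
  refine ⟨by positivity, div_le_of_le_mul₀ (by positivity) (by norm_num) ?_⟩
  linarith [min_le_left a b, min_le_right a b]

lemma add_mul_min_div_add {a b : ℝ} (ha : 0 ≤ a) (hb : 0 ≤ b) :
    (a + b) * (min a b / (a + b)) = min a b := by
  refine mul_div_cancel_of_imp' fun h => ?_
  obtain ⟨rfl, rfl⟩ := (add_eq_zero_iff_of_nonneg ha hb).1 h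
  exact min_self 0

end BinaryEntropy

section BayesError

variable {κ : Type*} [Fintype κ]

/-- The conditional entropy of a binary label given a feature in `κ`, where `p u a` is the joint
probability of the feature `u` and the label `a`. -/
noncomputable def jointCondEntropy (p : κ → Bool → ℝ) : ℝ :=
  -∑ u, ∑ a, p u a * Real.logb 2 (p u a / ∑ b, p u b)

/-- The error probability of the optimal prediction of a binary label from a feature in `κ`, where
`p u a` is the joint probability of the feature `u` and the label `a`: at each feature the less
likely label is the one missed. -/
noncomputable def bayesError (p : κ → Bool → ℝ) : ℝ :=
  ∑ u, min (p u true) (p u false)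

lemma jointCondEntropy_eq_sum_mul_binEntropy (p : κ → Bool → ℝ) :
    jointCondEntropy p =
      ∑ u, (p u true + p u false) *
        binEntropy (min (p u true) (p u false) / (p u true + p u false)) := by
  simp only [jointCondEntropy, Fintype.sum_bool, ← Finset.sum_neg_distrib,
    neg_mul_logb_div_add_eq_mul_binEntropy]

variable {p : κ → Bool → ℝ}

/-- The Hellman–Raviv inequality. -/
lemma two_mul_bayesError_le_jointCondEntropy (hp : ∀ u a, 0 ≤ p u a) :
    2 * bayesError p ≤ jointCondEntropy p := by
  rw [jointCondEntropy_eq_sum_mul_binEntropy, bayesError, Finset.mul_sum]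
  refine Finset.sum_le_sum fun u _ => ?_
  obtain ⟨h_nonneg, h_le_half⟩ := min_div_add_mem_Icc (hp u true) (hp u false)
  calc 2 * min (p u true) (p u false)
      = (p u true + p u false) * (2 * (min (p u true) (p u false) / (p u true + p u false))) := by
        rw [mul_left_comm, add_mul_min_div_add (hp u true) (hp u false)]
    _ ≤ _ := mul_le_mul_of_nonneg_left (two_mul_le_binEntropy h_nonneg h_le_half)
        (add_nonneg (hp u true) (hp u false))

/-- Fano's inequality for a binary label. -/
lemma jointCondEntropy_le_binEntropy_bayesError (hp : ∀ u a, 0 ≤ p u a)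
    (hp_sum : ∑ u, ∑ a, p u a = 1) : jointCondEntropy p ≤ binEntropy (bayesError p) := by
  simp only [Fintype.sum_bool] at hp_sum
  have h_jensen := concaveOn_binEntropy.le_map_sum (t := Finset.univ)
    (w := fun u => p u true + p u false)
    (p := fun u => min (p u true) (p u false) / (p u true + p u false))
    (fun u _ => add_nonneg (hp u true) (hp u false)) hp_sum
    (fun u _ => Set.Icc_subset_Icc_right (by norm_num)
      (min_div_add_mem_Icc (hp u true) (hp u false)))
  simpa only [jointCondEntropy_eq_sum_mul_binEntropy, bayesError, smul_eq_mul,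
    add_mul_min_div_add (hp _ true) (hp _ false)] using h_jensen

end BayesError

section Counting

lemma inf'_univ_sum_apply {κ α M : Type*} [Fintype κ] [DecidableEq κ] [Fintype α] [Nonempty α]
    [LinearOrder M] [AddCommMonoid M] [IsOrderedAddMonoid M] (F : κ → α → M) :
    Finset.univ.inf' Finset.univ_nonempty (fun f : κ → α => ∑ u, F u (f u)) =
      ∑ u, Finset.univ.inf' Finset.univ_nonempty (F u) := by
  apply le_antisymm
  · choose f _ hf using fun u => Finset.exists_mem_eq_inf' Finset.univ_nonempty (F u)
    simp only [hf]
    exact Finset.inf'_le (fun g : κ → α => ∑ u, F u (g u)) (Finset.mem_univ f)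
  · exact Finset.le_inf' _ _ fun f _ =>
      Finset.sum_le_sum fun u _ => Finset.inf'_le _ (Finset.mem_univ (f u))

lemma inf'_univ_bool {M : Type*} [LinearOrder M] (F : Bool → M) :
    Finset.univ.inf' Finset.univ_nonempty F = min (F true) (F false) := by
  simp [Fintype.univ_bool]

lemma card_filter_eq_sum_card_filter_and {ι κ : Type*} [Fintype κ] [DecidableEq κ]
    (s : Finset ι) (P : ι → Prop) [DecidablePred P] (c : ι → κ) :
    (s.filter P).card = ∑ u, (s.filter fun i => P i ∧ c i = u).card := by
  simp only [Finset.card_eq_sum_card_fiberwise (f := c) (t := Finset.univ) (s := s.filter P)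
    (by simp), Finset.filter_filter]

end Counting

section Words

variable (x : ℕ → Bool) (ℓ n : ℕ)

/-- The word `x[i:i+ℓ)` as a function on `Fin ℓ`, which is the form in which predictors read it. -/
def window (i : ℕ) : Fin ℓ → Bool := fun j => x (i + j)

/-- The number of occurrences in `x[0:n)` of the word `u` of length `ℓ` followed by the letter `a`,
that is `occ(x[0:n), u·a)`. -/
def transitionCount (u : Fin ℓ → Bool) (a : Bool) : ℕ :=
  ((Finset.range (n - ℓ)).filter fun i => window x ℓ i = u ∧ x (i + ℓ) = a).card

/-- The empirical joint distribution `p(u·a)` of the contexts `u` of length `ℓ` and the letters `a`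
following them in `x[0:n)`. -/
noncomputable def transitionFreq (u : Fin ℓ → Bool) (a : Bool) : ℝ :=
  transitionCount x ℓ n u a / ((n : ℝ) - ℓ)

variable {x ℓ n}

lemma occ_ofFn_append_singleton (u : Fin ℓ → Bool) (a : Bool) :
    occ x n (List.ofFn u ++ [a]) = transitionCount x ℓ n u a := by
  have h_factor (i : ℕ) : factor x i (ℓ + 1) = List.ofFn (window x ℓ i) ++ [x (i + ℓ)] := by
    rw [factor, List.ofFn_succ_last]
    rfl
  simp [occ, transitionCount, h_factor, List.append_singleton_inj]

lemma occ_pred_ofFn (hn : ℓ < n) (u : Fin ℓ → Bool) :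
    occ x (n - 1) (List.ofFn u) = ∑ a, transitionCount x ℓ n u a := by
  have h_factor (i : ℕ) : factor x i ℓ = List.ofFn (window x ℓ i) := rfl
  simp only [occ, transitionCount, List.length_ofFn, h_factor, List.ofFn_inj,
    show n - 1 + 1 = n by omega]
  exact card_filter_eq_sum_card_filter_and _ _ fun i => x (i + ℓ)

lemma sum_transitionCount : ∑ u, ∑ a, transitionCount x ℓ n u a = n - ℓ := by
  have h := card_filter_eq_sum_card_filter_and (Finset.range (n - ℓ)) (fun _ => True)
    fun i => (window x ℓ i, x (i + ℓ))
  simpa [transitionCount, Fintype.sum_prod_type] using h.symm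

lemma card_filter_ne_eq_sum_transitionCount (f : (Fin ℓ → Bool) → Bool) :
    ((Finset.Ico ℓ n).filter fun i => x i ≠ f fun j => x (i - ℓ + j)).card =
      ∑ u, transitionCount x ℓ n u (!f u) := by
  have h_shift : ((Finset.Ico ℓ n).filter fun i => x i ≠ f fun j => x (i - ℓ + j)).card =
      ((Finset.range (n - ℓ)).filter fun i => x (i + ℓ) ≠ f (window x ℓ i)).card := by
    simp only [Finset.card_filter, Finset.sum_Ico_eq_sum_range, add_comm ℓ, add_tsub_cancel_right]
    rfl
  rw [h_shift, card_filter_eq_sum_card_filter_and _ _ (window x ℓ)]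
  refine Finset.sum_congr rfl fun u _ => congrArg Finset.card (Finset.filter_congr fun i _ => ?_)
  rw [and_comm, Bool.eq_not]
  exact and_congr_right fun h => by rw [h]

lemma sum_transitionFreq (hn : ℓ < n) : ∑ u, ∑ a, transitionFreq x ℓ n u a = 1 := by
  have h_pos : (0 : ℝ) < n - ℓ := sub_pos.2 (Nat.cast_lt.2 hn)
  simp only [transitionFreq, ← Finset.sum_div, ← Nat.cast_sum]
  rw [sum_transitionCount, Nat.cast_sub hn.le, div_self h_pos.ne']

lemma transitionFreq_nonneg (hn : ℓ ≤ n) (u : Fin ℓ → Bool) (a : Bool) :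
    0 ≤ transitionFreq x ℓ n u a :=
  div_nonneg (Nat.cast_nonneg _) (sub_nonneg.2 (Nat.cast_le.2 hn))

lemma gammaWord_eq_bayesError (hn : ℓ ≤ n) :
    gammaWord ℓ x n = bayesError (transitionFreq x ℓ n) := by
  have h_nonneg : (0 : ℝ) ≤ n - ℓ := sub_nonneg.2 (Nat.cast_le.2 hn)
  simp only [gammaWord, card_filter_ne_eq_sum_transitionCount, Nat.cast_sum, bayesError,
    transitionFreq, min_div_div_right h_nonneg, ← Finset.sum_div]
  rw [inf'_univ_sum_apply fun u b => (transitionCount x ℓ n u (!b) : ℝ), one_div_mul_eq_div]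
  simp only [inf'_univ_bool, Bool.not_true, Bool.not_false, min_comm]

lemma condEntropy_eq_jointCondEntropy (hn : ℓ < n) :
    condEntropy ℓ x n = jointCondEntropy (transitionFreq x ℓ n) := by
  simp only [condEntropy, jointCondEntropy, occ_ofFn_append_singleton, occ_pred_ofFn hn,
    Nat.cast_sum, Finset.sum_div]
  refine congrArg Neg.neg (Finset.sum_congr rfl fun u _ => Finset.sum_congr rfl fun a _ => ?_)
  refine ite_eq_left_iff.2 fun h => ?_
  rw [le_antisymm (not_lt.1 h) (transitionFreq_nonneg hn.le u a), zero_mul]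

end Words

theorem condEntropy_bounds (x : ℕ → Bool) (ℓ n : ℕ) (h1 : 1 ≤ ℓ) (h2 : ℓ < n) :
    2 * gammaWord ℓ x n ≤ condEntropy ℓ x n ∧
    condEntropy ℓ x n ≤ binEntropy (gammaWord ℓ x n) := by
  have h_nonneg := transitionFreq_nonneg (x := x) h2.le
  rw [gammaWord_eq_bayesError h2.le, condEntropy_eq_jointCondEntropy h2]
  exact ⟨two_mul_bayesError_le_jointCondEntropy h_nonneg,
    jointCondEntropy_le_binEntropy_bayesError h_nonneg (sum_transitionFreq h2)⟩
end
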